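/- arXiv:2502.15249 — 2 statements merged into one kernel-verified Lean document; each statement's English description precedes it below -/
import Mathlib

section
/- Let a, n be real numbers and b an integer, and set f(n,b) = Σ_{k=0}^∞ ((a)_{k+b})^4 / ((n−a+1)_{k+b})^4 · (n + 2k + 2b). Define q₁(j) = −10a² + 8ab + 22aj + 14an + 28a − 2b² − 10bj − 6bn − 12b − 13j² − 16jn − 32j − 5n² − 20n − 20, q₂(j) = 4a − 2j − 2n − 3, s₁(n) = (−2a+n+1)^5 / (4(4a−2n−1)(−a+n+1)^4), and s₂(j) = (−2a+j+n+2)^5 (2b+3j+n+4) / (−a+b+2j+n+3)^4. If a < (2n+1)/4, and all Pochhammer symbols appearing below are well defined and nonzero (no Gamma argument is a nonpositive integer) and q₂(j) ≠ 0 and −a+b+2j+n+3 ≠ 0 for every integer j ≥ −1, then f(n,b) = s₁(n) · Σ_{j=−1}^∞ (−1/4)^j · (q₁(j) + s₂(j))/q₂(j) · [((n−2a+2)_j)^5 / ((n−2a+3/2)_j · ((n−a+2)_j)^4)] · [((a)_{j+b+1})^4 / ((n+j−a+2)_{j+b+1})^4], both series converging. -/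
/-! The proof runs on a contiguity relation of Wilf–Zeilberger type.  With
`F(n, m) = (a)_m⁴ / (n-a+1)_m⁴ * (n + 2m)` there is a factor `C(n)`, independent of `m`, with
`F(n, m) - C(n) F(n + 1, m) = G(n, m) - G(n, m + 1)`, where `G` is `(a)_m⁴ / (n-a+1)_m⁴` times a
quadratic polynomial in `m` (`termF_telescope`).  By Euler's limit for the Gamma function
`F(n, m)` is of order `m ^ (4 (2a - n - 1) + 1)`, so the hypothesis `a < (2n + 1) / 4` is what makes
`Σ F` converge and `G` tend to zero.  Summing over `m ≥ b` and splitting off one term gives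
`f(n, b) = A(n, b) + C(n) f(n + 1, b + 1)` (`sumF_rec`).

Iterating along the diagonal `(n + i, b + i)` yields the right-hand series: the products of the
`C(n + i)` are, up to normalisation, its Pochhammer weights (`weightD_succ`), and `A` is the
quotient involving `q₁`, `s₂` and `q₂`.  Since `C(n + i) → -1/4` while `f(n + i, b + i)` stays
bounded (`sumF_bounded`), the remainder vanishes and the series converges (`hasSum_iterate`). -/

/-- The Pochhammer symbol with integer (possibly negative) index:
`(x)_m = Γ(x + m) / Γ(x)`. -/
noncomputable def pochZ (x : ℝ) (m : ℤ) : ℝ := Real.Gamma (x + m) / Real.Gamma x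

/-- `x` is not a nonpositive integer, i.e. `Γ(x)` is well defined (and nonzero). -/
def NotNonposInt (x : ℝ) : Prop := ∀ m : ℤ, m ≤ 0 → x ≠ (m : ℝ)

section

open Filter Topology

/-! ### Pochhammer symbols -/

lemma NotNonposInt.add_one {x : ℝ} (h : NotNonposInt x) : NotNonposInt (x + 1) := by
  intro m hm hx
  refine h (m - 1) (by omega) ?_
  push_cast
  linarith

lemma NotNonposInt.add_nat {x : ℝ} (h : NotNonposInt x) (k : ℕ) : NotNonposInt (x + k) := by
  induction k with
  | zero => simpa using h
  | succ k ih =>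
    have := ih.add_one
    push_cast
    rwa [add_assoc] at this

lemma NotNonposInt.ne_zero {x : ℝ} (h : NotNonposInt x) : x ≠ 0 := by
  simpa using h 0 le_rfl

lemma NotNonposInt.ne_neg_nat {x : ℝ} (h : NotNonposInt x) (m : ℕ) : x ≠ -m := by
  simpa using h (-m) (by omega)

lemma NotNonposInt.gamma_ne_zero {x : ℝ} (h : NotNonposInt x) : Real.Gamma x ≠ 0 :=
  Real.Gamma_ne_zero h.ne_neg_nat

lemma pochZ_ne_zero {x : ℝ} {m : ℤ} (hx : NotNonposInt x) (hm : NotNonposInt (x + m)) :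
    pochZ x m ≠ 0 :=
  div_ne_zero hm.gamma_ne_zero hx.gamma_ne_zero

lemma pochZ_succ {x : ℝ} {m : ℤ} (hm : x + m ≠ 0) :
    pochZ x (m + 1) = pochZ x m * (x + m) := by
  unfold pochZ
  push_cast
  rw [← add_assoc, Real.Gamma_add_one hm]
  ring

lemma pochZ_shift {x : ℝ} {m : ℤ} (hx : x ≠ 0) (hm : x + m ≠ 0) :
    pochZ (x + 1) m = pochZ x m * (x + m) / x := by
  unfold pochZ
  rw [add_right_comm, Real.Gamma_add_one hm, Real.Gamma_add_one hx]
  field_simp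

/-- The hypotheses under which the series `f(n, b)` converges and has well-defined, nonzero
Pochhammer symbols; they are stable under `n ↦ n + 1` and under `b ↦ b + 1`. -/
structure Good (a n : ℝ) (b : ℤ) : Prop where
  lt : a < (2 * n + 1) / 4
  base₁ : NotNonposInt a
  base₂ : NotNonposInt (n - a + 1)
  top₁ : NotNonposInt (a + b)
  top₂ : NotNonposInt (n - a + 1 + b)

lemma Good.succ_left {a n : ℝ} {b : ℤ} (h : Good a n b) : Good a (n + 1) b where
  lt := by linarith [h.lt]
  base₁ := h.base₁
  base₂ := by convert h.base₂.add_one using 1; ring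
  top₁ := h.top₁
  top₂ := by convert h.top₂.add_one using 1; ring

lemma Good.succ_right {a n : ℝ} {b : ℤ} (h : Good a n b) : Good a n (b + 1) where
  lt := h.lt
  base₁ := h.base₁
  base₂ := h.base₂
  top₁ := by convert h.top₁.add_one using 1; push_cast; ring
  top₂ := by convert h.top₂.add_one using 1; push_cast; ring

lemma Good.add_nat_right {a n : ℝ} {b : ℤ} (h : Good a n b) (k : ℕ) : Good a n (b + k) := by
  induction k with
  | zero => simpa using h
  | succ k ih => simpa [add_assoc] using ih.succ_right

lemma Good.diag {a n : ℝ} {b : ℤ} (h : Good a n b) (k : ℕ) : Good a (n + k) (b + k) := by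
  induction k with
  | zero => simpa using h
  | succ k ih => simpa [add_assoc] using ih.succ_right.succ_left

/-! ### The telescoping identity -/

/-- The hypergeometric part `(a)_m⁴ / (n-a+1)_m⁴` of the summand. -/
noncomputable def ratioU (a n : ℝ) (m : ℤ) : ℝ := pochZ a m ^ 4 / pochZ (n - a + 1) m ^ 4

/-- The summand of `f(n, b)`, as a function of `m = k + b`. -/
noncomputable def termF (a n : ℝ) (m : ℤ) : ℝ := ratioU a n m * (n + 2 * m)

/-- The factor `C(n)` in the contiguity relation `f(n, b) = A(n, b) + C(n) f(n + 1, b + 1)`. -/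
noncomputable def coefC (a n : ℝ) : ℝ :=
  (n - 2 * a + 1) ^ 5 / (2 * (4 * a - 2 * n - 1) * (n - a + 1) ^ 4)

/-- The polynomial `q₁(-1)`, with `b` replaced by a real variable. -/
def polyQ (a n x : ℝ) : ℝ :=
  -10 * a ^ 2 + 8 * a * x + 6 * a + 14 * a * n - 2 * x ^ 2 - 2 * x - 6 * x * n - 1 - 4 * n
    - 5 * n ^ 2

/-- The Wilf–Zeilberger companion of `termF`. -/
noncomputable def certG (a n : ℝ) (m : ℤ) : ℝ :=
  ratioU a n m * (polyQ a n m / (2 * (4 * a - 2 * n - 1)))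

lemma ratioU_succ_left {a n : ℝ} {m : ℤ} (h : Good a n m) :
    ratioU a (n + 1) m = ratioU a n m * (n - a + 1) ^ 4 / (n - a + 1 + m) ^ 4 := by
  have h1 := pochZ_shift h.base₂.ne_zero h.top₂.ne_zero
  have h0 := pochZ_ne_zero h.base₂ h.top₂
  have h2 := h.base₂.ne_zero
  have h3 := h.top₂.ne_zero
  unfold ratioU
  rw [show n + 1 - a + 1 = n - a + 1 + 1 by ring, h1]
  field_simp

lemma ratioU_succ_right {a n : ℝ} {m : ℤ} (h : Good a n m) :
    ratioU a n (m + 1) = ratioU a n m * (a + m) ^ 4 / (n - a + 1 + m) ^ 4 := by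
  have h1 := pochZ_succ h.top₁.ne_zero
  have h2 := pochZ_succ h.top₂.ne_zero
  have h0 := pochZ_ne_zero h.base₂ h.top₂
  have h3 := h.top₂.ne_zero
  unfold ratioU
  rw [h1, h2]
  field_simp

/-- The Wilf–Zeilberger identity: after dividing by `ratioU a n m` it is an identity of rational
functions in `a, n, m`. -/
lemma termF_telescope {a n : ℝ} {m : ℤ} (h : Good a n m) :
    termF a n m - coefC a n * termF a (n + 1) m = certG a n m - certG a n (m + 1) := by
  have h2 := h.base₂.ne_zero
  have h3 := h.top₂.ne_zero
  have h4 : 4 * a - 2 * n - 1 ≠ 0 := by linarith [h.lt]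
  unfold termF certG coefC polyQ
  rw [ratioU_succ_left h, ratioU_succ_right h]
  push_cast
  generalize hq : 4 * a - 2 * n - 1 = q at *
  field_simp
  rw [← hq]
  ring

/-! ### Asymptotics and convergence -/

lemma gamma_add_nat {s : ℝ} (hs : NotNonposInt s) (k : ℕ) :
    Real.Gamma (s + k) = Real.Gamma s * ∏ j ∈ Finset.range k, (s + j) := by
  induction k with
  | zero => simp
  | succ k ih =>
    rw [Finset.prod_range_succ, ← mul_assoc, ← ih]
    push_cast
    rw [← add_assoc, Real.Gamma_add_one (hs.add_nat k).ne_zero, mul_comm]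

/-- `Γ(s + k + 1) / Γ(t + k + 1) ~ k ^ (s - t)`, deduced from Euler's limit formula for `Γ`. -/
lemma gamma_ratio_tendsto {s t : ℝ} (hs : NotNonposInt s) (ht : NotNonposInt t) :
    Tendsto (fun k : ℕ => (k : ℝ) ^ (t - s) *
      (Real.Gamma (s + (k + 1 : ℕ)) / Real.Gamma (t + (k + 1 : ℕ)))) atTop (𝓝 1) := by
  have h := ((Real.GammaSeq_tendsto_Gamma t).div (Real.GammaSeq_tendsto_Gamma s)
    hs.gamma_ne_zero).mul_const (Real.Gamma s / Real.Gamma t)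
  have hs0 := hs.gamma_ne_zero
  have ht0 := ht.gamma_ne_zero
  have e : Real.Gamma t / Real.Gamma s * (Real.Gamma s / Real.Gamma t) = 1 := by
    field_simp
  rw [e] at h
  refine h.congr' ?_
  filter_upwards [eventually_gt_atTop 0] with k hk
  have hk' : (0 : ℝ) < k := by exact_mod_cast hk
  have h1 := gamma_add_nat hs (k + 1)
  have h2 := gamma_add_nat ht (k + 1)
  have h3 : ∏ j ∈ Finset.range (k + 1), (s + j) ≠ 0 :=
    Finset.prod_ne_zero_iff.2 fun j _ => (hs.add_nat j).ne_zero
  have h4 : ∏ j ∈ Finset.range (k + 1), (t + j) ≠ 0 :=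
    Finset.prod_ne_zero_iff.2 fun j _ => (ht.add_nat j).ne_zero
  have h5 : ((k.factorial : ℕ) : ℝ) ≠ 0 := by exact_mod_cast k.factorial_ne_zero
  have h6 := (Real.rpow_pos_of_pos hk' s).ne'
  simp only [Pi.div_apply, Real.GammaSeq]
  rw [h1, h2, Real.rpow_sub hk']
  field_simp

/-- `(a)_m⁴ / (n-a+1)_m⁴` has the order `m ^ (4 (2a - n - 1))`: this is
`gamma_ratio_tendsto` raised to the fourth power. -/
lemma ratioU_tendsto {a n : ℝ} {b : ℤ} (h : Good a n b) :
    ∃ c : ℝ, Tendsto (fun k : ℕ => (k : ℝ) ^ (4 * (n + 1 - 2 * a)) *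
      ratioU a n (b + (k + 1 : ℕ))) atTop (𝓝 c) := by
  refine ⟨_, ((((gamma_ratio_tendsto h.top₁ h.top₂).pow 4).mul_const
    ((Real.Gamma (n - a + 1) / Real.Gamma a) ^ 4))).congr fun k => ?_⟩
  unfold ratioU pochZ
  have e : (k : ℝ) ^ (4 * (n + 1 - 2 * a)) = ((k : ℝ) ^ (n - a + 1 + b - (a + b))) ^ 4 := by
    rw [← Real.rpow_natCast, ← Real.rpow_mul (Nat.cast_nonneg k)]
    congr 1
    push_cast
    ring
  rw [e]
  push_cast
  simp only [← add_assoc]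
  have h1 := h.base₁.gamma_ne_zero
  have h2 := h.base₂.gamma_ne_zero
  have h3 := (h.top₂.add_nat (k + 1)).gamma_ne_zero
  push_cast at h3
  simp only [← add_assoc] at h3
  field_simp

lemma ratioU_isBigO {a n : ℝ} {b : ℤ} (h : Good a n b) :
    (fun k : ℕ => ratioU a n (b + (k + 1 : ℕ))) =O[atTop]
      (fun k : ℕ => (k : ℝ) ^ (-(4 * (n + 1 - 2 * a)))) := by
  obtain ⟨c, hc⟩ := ratioU_tendsto h
  have h1 := (hc.isBigO_one ℝ).mul
    (Asymptotics.isBigO_refl (fun k : ℕ => (k : ℝ) ^ (-(4 * (n + 1 - 2 * a)))) atTop)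
  refine h1.congr' ?_ ?_
  · filter_upwards [eventually_gt_atTop 0] with k hk
    have hk' : (0 : ℝ) < k := by exact_mod_cast hk
    rw [Real.rpow_neg hk'.le]
    have := (Real.rpow_pos_of_pos hk' (4 * (n + 1 - 2 * a))).ne'
    field_simp
  · filter_upwards with k
    simp

lemma linear_isBigO (α β : ℝ) :
    (fun k : ℕ => α + β * (k : ℝ)) =O[atTop] (fun k : ℕ => (k : ℝ)) := by
  refine Asymptotics.IsBigO.of_bound (|α| + |β|) ?_
  filter_upwards [eventually_ge_atTop 1] with k hk
  have hk' : (1 : ℝ) ≤ k := by exact_mod_cast hk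
  rw [Real.norm_eq_abs, Real.norm_eq_abs, abs_of_pos (by linarith : (0 : ℝ) < k)]
  calc |α + β * k| ≤ |α| + |β * k| := abs_add_le _ _
    _ = |α| + |β| * k := by rw [abs_mul, abs_of_pos (by linarith : (0 : ℝ) < k)]
    _ ≤ _ := by nlinarith [abs_nonneg α]

lemma termF_summable {a n : ℝ} {b : ℤ} (h : Good a n b) :
    Summable (fun k : ℕ => termF a n (b + k)) := by
  refine (summable_nat_add_iff 1).1 ?_
  have h1 := (ratioU_isBigO h).mul (linear_isBigO (n + 2 * b + 2) 2)
  have h2 : Summable (fun k : ℕ => (k : ℝ) ^ (-(4 * (n + 1 - 2 * a)) + 1)) :=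
    Real.summable_nat_rpow.2 (by linarith [h.lt])
  refine summable_of_isBigO_nat h2 (h1.congr' ?_ ?_)
  · filter_upwards with k
    unfold termF
    push_cast
    ring
  · filter_upwards [eventually_gt_atTop 0] with k hk
    have hk' : (0 : ℝ) < k := by exact_mod_cast hk
    rw [Real.rpow_add_one hk'.ne']

lemma certG_tendsto {a n : ℝ} {b : ℤ} (h : Good a n b) :
    Tendsto (fun k : ℕ => certG a n (b + k)) atTop (𝓝 0) := by
  refine (tendsto_add_atTop_iff_nat 1).1 ?_
  have hq : (fun k : ℕ => polyQ a n ((b + (k + 1 : ℕ) : ℤ)) / (2 * (4 * a - 2 * n - 1)))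
      =O[atTop] (fun k : ℕ => (k : ℝ) * (k : ℝ)) := by
    have e1 := (linear_isBigO (b + 1) 1).mul
      (linear_isBigO ((8 * a - 2 - 6 * n) - 2 * (b + 1)) (-2))
    have e2 : (fun _ : ℕ => -10 * a ^ 2 + 6 * a + 14 * a * n - 1 - 4 * n - 5 * n ^ 2)
        =O[atTop] (fun k : ℕ => (k : ℝ) * (k : ℝ)) := by
      refine Asymptotics.IsBigO.of_bound
        |-10 * a ^ 2 + 6 * a + 14 * a * n - 1 - 4 * n - 5 * n ^ 2| ?_
      filter_upwards [eventually_ge_atTop 1] with k hk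
      have hk' : (1 : ℝ) ≤ k := by exact_mod_cast hk
      rw [Real.norm_eq_abs, Real.norm_eq_abs, abs_of_pos (by positivity : (0 : ℝ) < k * k)]
      exact le_mul_of_one_le_right (abs_nonneg _) (by nlinarith)
    refine ((e1.add e2).const_mul_left (2 * (4 * a - 2 * n - 1))⁻¹).congr_left fun k => ?_
    unfold polyQ
    push_cast
    ring
  have h1 := (ratioU_isBigO h).mul hq
  have h2 : Tendsto (fun k : ℕ => (k : ℝ) ^ (-(4 * (n + 1 - 2 * a) - 2))) atTop (𝓝 0) :=
    (tendsto_rpow_neg_atTop (by linarith [h.lt])).comp tendsto_natCast_atTop_atTop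
  refine Asymptotics.IsBigO.trans_tendsto (h1.congr' ?_ ?_) h2
  · filter_upwards with k
    simp only [certG]
  · filter_upwards [eventually_gt_atTop 0] with k hk
    have hk' : (0 : ℝ) < k := by exact_mod_cast hk
    rw [show -(4 * (n + 1 - 2 * a) - 2) = -(4 * (n + 1 - 2 * a)) + 1 + 1 by ring,
      Real.rpow_add_one hk'.ne', Real.rpow_add_one hk'.ne']
    ring

/-! ### The contiguity relation -/

/-- The series `f(n, b)`. -/
noncomputable def sumF (a n : ℝ) (b : ℤ) : ℝ := ∑' k : ℕ, termF a n (b + k)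

/-- The inhomogeneous term in `f(n, b) = A(n, b) + C(n) f(n + 1, b + 1)`. -/
noncomputable def coefA (a n : ℝ) (b : ℤ) : ℝ :=
  certG a n b + coefC a n * termF a (n + 1) b

/-- The contiguity relation, obtained by summing the Wilf–Zeilberger identity over `k` and
splitting off the first term of `f(n + 1, b)`. -/
lemma sumF_rec {a n : ℝ} {b : ℤ} (h : Good a n b) :
    sumF a n b = coefA a n b + coefC a n * sumF a (n + 1) (b + 1) := by
  have s1 := termF_summable h
  have s2 := termF_summable h.succ_left
  have h1 : sumF a (n + 1) b = termF a (n + 1) b + sumF a (n + 1) (b + 1) := by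
    unfold sumF
    rw [s2.tsum_eq_zero_add]
    congr 1
    · simp
    · refine tsum_congr fun k => ?_
      congr 1
      push_cast
      ring
  have h2 := (s1.hasSum.sub (s2.hasSum.mul_left (coefC a n))).tendsto_sum_nat
  have h3 : Tendsto (fun N : ℕ => certG a n b - certG a n (b + N)) atTop
      (𝓝 (certG a n b - 0)) := tendsto_const_nhds.sub (certG_tendsto h)
  have h4 : ∀ N : ℕ, ∑ k ∈ Finset.range N,
      (termF a n (b + k) - coefC a n * termF a (n + 1) (b + k))
        = certG a n b - certG a n (b + N) := by
    intro N
    induction N with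
    | zero => simp
    | succ N ih =>
      rw [Finset.sum_range_succ, ih, termF_telescope (h.add_nat_right N)]
      push_cast
      rw [← add_assoc]
      ring
  have h5 := tendsto_nhds_unique (h2.congr h4) h3
  change sumF a n b - coefC a n * sumF a (n + 1) b = certG a n b - 0 at h5
  rw [h1] at h5
  unfold coefA
  linarith

/-! ### Boundedness along the diagonal -/

lemma ratioU_diag {a n : ℝ} {m : ℤ} (h : Good a n m) :
    ratioU a (n + 1) (m + 1) = ratioU a n m *
      ((n - a + 1) * (a + m) / ((n - a + 1 + m) * (n - a + 2 + m))) ^ 4 := by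
  rw [ratioU_succ_right h.succ_left, ratioU_succ_left h]
  have h3 := h.top₂.ne_zero
  have h4 := h.succ_left.top₂.ne_zero
  have h5 : n - a + 2 + m ≠ 0 := by convert h4 using 1; ring
  rw [show n + 1 - a + 1 + (m : ℝ) = n - a + 2 + m by ring]
  field_simp

/-- Once both upper parameters are large, a diagonal step shrinks every summand: by AM-GM the
hypergeometric part shrinks by at least the factor `1/2`, while the linear factor at most
doubles. -/
lemma termF_diag_le {a n : ℝ} {m : ℤ} (h : Good a n m) (hX : 4 * |a| + 4 ≤ n - a + 1)
    (hY : 4 * |a| + 4 ≤ a + m) :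
    |termF a (n + 1) (m + 1)| ≤ |termF a n m| := by
  have ha1 := neg_abs_le a
  have ha2 := le_abs_self a
  have ha3 := abs_nonneg a
  unfold termF
  rw [ratioU_diag h]
  set X := n - a + 1 with hXd
  set Y := a + (m : ℝ) with hYd
  have e1 : X + m = X + Y - a := by rw [hYd]; ring
  have e2 : n - a + 2 + m = X + Y - a + 1 := by rw [hXd, hYd]; ring
  rw [e1, e2]
  set r := X * Y / ((X + Y - a) * (X + Y - a + 1)) with hr
  have hT : 3 / 4 * (X + Y) ≤ X + Y - a := by linarith
  have hTp : 0 < X + Y := by linarith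
  have hd : 0 < (X + Y - a) * (X + Y - a + 1) := by
    apply mul_pos <;> linarith
  have hr0 : 0 ≤ r := div_nonneg (mul_nonneg (by linarith) (by linarith)) hd.le
  have hr1 : r ≤ 1 / 2 := by
    rw [hr, div_le_iff₀ hd]
    have : 3 / 4 * (X + Y) * (3 / 4 * (X + Y)) ≤ (X + Y - a) * (X + Y - a + 1) :=
      mul_le_mul hT (by linarith) (by linarith) (by linarith)
    nlinarith [sq_nonneg (X - Y)]
  have hr4 : r ^ 4 ≤ 1 / 2 := by
    calc r ^ 4 ≤ (1 / 2) ^ 4 := by gcongr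
      _ ≤ 1 / 2 := by norm_num
  have hl : 3 ≤ n + 2 * (m : ℝ) := by linarith
  rw [mul_assoc, abs_mul, abs_mul (ratioU a n m) (n + 2 * (m : ℝ))]
  refine mul_le_mul_of_nonneg_left ?_ (abs_nonneg _)
  push_cast
  have hl' : 0 ≤ n + 1 + 2 * ((m : ℝ) + 1) := by linarith
  rw [abs_of_nonneg (mul_nonneg (by positivity) hl'),
    abs_of_nonneg (by linarith : 0 ≤ n + 2 * (m : ℝ))]
  calc r ^ 4 * (n + 1 + 2 * ((m : ℝ) + 1)) ≤ 1 / 2 * (n + 1 + 2 * ((m : ℝ) + 1)) := by gcongr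
    _ ≤ _ := by linarith

/-- `f(n + i, b + i)` stays bounded in `i`. -/
lemma sumF_bounded {a n : ℝ} {b : ℤ} (h : Good a n b) :
    ∃ M : ℝ, ∀ᶠ i : ℕ in atTop, |sumF a (n + i) (b + i)| ≤ M := by
  obtain ⟨I, hI⟩ := exists_nat_ge (4 * |a| + 4 + |n - a + 1| + |a + b|)
  have hmono : ∀ i : ℕ, I ≤ i →
      ∑' k : ℕ, |termF a (n + i) (b + i + k)| ≤ ∑' k : ℕ, |termF a (n + I) (b + I + k)| := by
    intro i hi
    induction i, hi using Nat.le_induction with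
    | base => exact le_rfl
    | succ i hi ih =>
      refine le_trans ?_ ih
      have g := h.diag i
      have g' := h.diag (i + 1)
      refine Summable.tsum_le_tsum ?_ (termF_summable g').abs (termF_summable g).abs
      intro k
      have hi' : (I : ℝ) ≤ i := by exact_mod_cast hi
      have hk : (0 : ℝ) ≤ k := Nat.cast_nonneg k
      have := termF_diag_le (g.add_nat_right k)
        (by linarith [neg_abs_le (n - a + 1), abs_nonneg (a + (b : ℝ))])
        (by push_cast; linarith [neg_abs_le (a + (b : ℝ)), abs_nonneg (n - a + 1)])
      have e1 : n + ((i + 1 : ℕ) : ℝ) = n + i + 1 := by push_cast; ring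
      have e2 : b + ((i + 1 : ℕ) : ℤ) + k = b + i + k + 1 := by push_cast; ring
      rwa [e1, e2]
  refine ⟨_, (eventually_ge_atTop I).mono fun i hi => le_trans ?_ (hmono i hi)⟩
  exact norm_tsum_le_tsum_norm (termF_summable (h.diag i)).norm

/-! ### Iteration -/

lemma tendsto_coefC (a n : ℝ) :
    Tendsto (fun i : ℕ => coefC a (n + i)) atTop (𝓝 (-1 / 4)) := by
  have key : ∀ c : ℝ, Tendsto (fun i : ℕ => (c + (i : ℝ)) / (i : ℝ)) atTop (𝓝 1) := by
    intro c
    have h1 : Tendsto (fun i : ℕ => c / (i : ℝ) + 1) atTop (𝓝 (0 + 1)) :=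
      (tendsto_const_div_atTop_nhds_zero_nat c).add_const 1
    rw [zero_add] at h1
    refine h1.congr' ?_
    filter_upwards [eventually_gt_atTop 0] with k hk
    have hk' : (k : ℝ) ≠ 0 := by exact_mod_cast hk.ne'
    field_simp
  have h1 := (((key (n - 2 * a + 1)).pow 5).div
    (((key (n - 2 * a + 1 / 2)).const_mul (-4)).mul ((key (n - a + 1)).pow 4)) (by norm_num))
  rw [show (1 : ℝ) ^ 5 / (-4 * 1 * 1 ^ 4) = -1 / 4 by norm_num] at h1
  refine h1.congr' ?_
  filter_upwards [eventually_gt_atTop 0] with k hk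
  have hk' : (k : ℝ) ≠ 0 := by exact_mod_cast hk.ne'
  unfold coefC
  have e1 : n + k - 2 * a + 1 = n - 2 * a + 1 + k := by ring
  have e2 : 2 * (4 * a - 2 * (n + k) - 1) = -4 * (n - 2 * a + 1 / 2 + k) := by ring
  have e3 : n + k - a + 1 = n - a + 1 + k := by ring
  simp only [Pi.div_apply, e1, e2, e3]
  rw [div_pow, div_pow, mul_div_assoc (-4 : ℝ) _ (k : ℝ) |>.symm, div_mul_div_comm, ← pow_succ',
    div_div_div_cancel_right₀ (pow_ne_zero 5 hk')]

/-- Iterating the contiguity relation along the diagonal, for any weights `D` satisfying the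
first-order recurrence with factor `C(n + i)`. -/
lemma hasSum_iterate {a n : ℝ} {b : ℤ} (h : Good a n b) (D : ℕ → ℝ)
    (hD : ∀ i, D (i + 1) = D i * coefC a (n + i)) :
    HasSum (fun i : ℕ => D i * coefA a (n + i) (b + i)) (D 0 * sumF a n b) := by
  have hDs : Summable D := by
    refine summable_of_ratio_norm_eventually_le (r := 1 / 2) (by norm_num) ?_
    have h1 := (tendsto_coefC a n).norm
    have h2 : ‖(-1 / 4 : ℝ)‖ < 1 / 2 := by norm_num
    filter_upwards [h1.eventually (gt_mem_nhds h2)] with i hi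
    rw [hD, norm_mul, mul_comm]
    gcongr
  obtain ⟨M, hM⟩ := sumF_bounded h
  have hrec : ∀ i : ℕ, D i * coefA a (n + i) (b + i) =
      D i * sumF a (n + i) (b + i) - D (i + 1) * sumF a (n + (i + 1 : ℕ)) (b + (i + 1 : ℕ)) := by
    intro i
    have := sumF_rec (h.diag i)
    push_cast
    simp only [← add_assoc]
    rw [hD, this]
    ring
  have hs0 : Summable fun i : ℕ => D i * sumF a (n + i) (b + i) := by
    refine summable_of_isBigO_nat hDs.norm (g := fun i => ‖D i‖) ?_
    refine Asymptotics.IsBigO.of_bound M ?_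
    filter_upwards [hM] with i hi
    rw [norm_mul, norm_norm, mul_comm, Real.norm_eq_abs (sumF _ _ _)]
    gcongr
  have hs1 := (summable_nat_add_iff 1).2 hs0
  have e : D 0 * sumF a n b = (∑' i : ℕ, D i * sumF a (n + i) (b + i)) -
      ∑' i : ℕ, D (i + 1) * sumF a (n + (i + 1 : ℕ)) (b + (i + 1 : ℕ)) := by
    rw [hs0.tsum_eq_zero_add]
    simp
  rw [e]
  simp only [hrec]
  exact hs0.hasSum.sub hs1.hasSum

/-! ### The weights -/

/-- The weights of the right-hand series, normalised so that `s₁(n) * weightD a n 0 = 1`. -/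
noncomputable def weightD (a n : ℝ) (i : ℕ) : ℝ :=
  2 * (-1 / 4 : ℝ) ^ ((i : ℤ) - 1) *
    (pochZ (n - 2 * a + 2) ((i : ℤ) - 1) ^ 5 /
      (pochZ (n - 2 * a + 3 / 2) ((i : ℤ) - 1) * pochZ (n - a + 2) ((i : ℤ) - 1) ^ 4))

lemma weightD_succ {a n : ℝ} (h : a < (2 * n + 1) / 4) (hb : NotNonposInt (n - a + 1)) (i : ℕ) :
    weightD a n (i + 1) = weightD a n i * coefC a (n + i) := by
  have hi : (0 : ℝ) ≤ i := Nat.cast_nonneg i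
  have hbi := (hb.add_nat i).ne_zero
  have a1 : n - 2 * a + 2 + (((i : ℤ) - 1 : ℤ) : ℝ) = n + i - 2 * a + 1 := by push_cast; ring
  have a2 : n - 2 * a + 3 / 2 + (((i : ℤ) - 1 : ℤ) : ℝ) = n + i - 2 * a + 1 / 2 := by
    push_cast; ring
  have a3 : n - a + 2 + (((i : ℤ) - 1 : ℤ) : ℝ) = n + i - a + 1 := by push_cast; ring
  have b1 : n + i - 2 * a + 1 ≠ 0 := by linarith
  have b2 : n + i - 2 * a + 1 / 2 ≠ 0 := by linarith
  have b3 : n + i - a + 1 ≠ 0 := by convert hbi using 1; ring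
  have c1 := pochZ_succ (x := n - 2 * a + 2) (m := (i : ℤ) - 1) (by rwa [a1])
  have c2 := pochZ_succ (x := n - 2 * a + 3 / 2) (m := (i : ℤ) - 1) (by rwa [a2])
  have c3 := pochZ_succ (x := n - a + 2) (m := (i : ℤ) - 1) (by rwa [a3])
  rw [a1] at c1
  rw [a2] at c2
  rw [a3] at c3
  unfold weightD coefC
  rw [show ((i + 1 : ℕ) : ℤ) - 1 = (i : ℤ) - 1 + 1 by push_cast; ring, c1, c2, c3,
    zpow_add_one₀ (by norm_num : (-1 / 4 : ℝ) ≠ 0)]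
  have e2 : 2 * (4 * a - 2 * (n + i) - 1) = -4 * (n + i - 2 * a + 1 / 2) := by ring
  rw [e2, mul_pow, mul_pow, mul_mul_mul_comm, mul_div_mul_comm,
    show (-1 / 4 : ℝ) = (-4)⁻¹ by norm_num, mul_assoc (-4 : ℝ), div_mul_eq_div_div_swap _ (-4 : ℝ)]
  ring

lemma weightD_zero {a n : ℝ} (h : a < (2 * n + 1) / 4) (hb : NotNonposInt (n - a + 1)) :
    (-2 * a + n + 1) ^ 5 / (4 * (4 * a - 2 * n - 1) * (-a + n + 1) ^ 4) * weightD a n 0 = 1 := by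
  have key : ∀ x : ℝ, NotNonposInt x → pochZ (x + 1) (-1) = x⁻¹ := by
    intro x hx
    have := hx.gamma_ne_zero
    have := hx.ne_zero
    unfold pochZ
    push_cast
    rw [add_neg_cancel_right, Real.Gamma_add_one hx.ne_zero]
    field_simp
  have pos : ∀ x : ℝ, 0 < x → NotNonposInt x := by
    intro x hx m hm e
    have : (m : ℝ) ≤ 0 := by exact_mod_cast hm
    linarith
  have k1 := key (-2 * a + n + 1) (pos _ (by linarith))
  have k2 := key (n - 2 * a + 1 / 2) (pos _ (by linarith))
  have k3 := key (-a + n + 1) (by convert hb using 1; ring)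
  have b1 : -2 * a + n + 1 ≠ 0 := by linarith
  have b2 : n - 2 * a + 1 / 2 ≠ 0 := by linarith
  have b3 : -a + n + 1 ≠ 0 := by convert hb.ne_zero using 1; ring
  unfold weightD
  rw [show n - 2 * a + 2 = -2 * a + n + 1 + 1 by ring,
    show n - 2 * a + 3 / 2 = n - 2 * a + 1 / 2 + 1 by ring,
    show n - a + 2 = -a + n + 1 + 1 by ring,
    show ((0 : ℕ) : ℤ) - 1 = -1 by norm_num, k1, k2, k3,
    show 4 * a - 2 * n - 1 = -2 * (n - 2 * a + 1 / 2) by ring, zpow_neg_one]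
  generalize n - 2 * a + 1 / 2 = y at *
  generalize -2 * a + n + 1 = x at *
  generalize -a + n + 1 = z at *
  field_simp

end

/-- Three-parameter generalization of Guillera's formula of convergence rate
`-1/1024` (Theorem 2 of the paper).  The right-hand series `Σ_{j=-1}^∞` is
indexed by `i : ℕ` with `j = i - 1`. -/
theorem three_param_guillera_double (a n : ℝ) (b : ℤ)
    (ha : a < (2 * n + 1) / 4)
    -- the Pochhammer symbols in the left-hand series are well defined and nonzero
    (hbase₁ : NotNonposInt a) (hbase₂ : NotNonposInt (n - a + 1))
    (hL : ∀ k : ℕ, NotNonposInt (a + ((k : ℤ) + b : ℤ)) ∧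
      NotNonposInt (n - a + 1 + ((k : ℤ) + b : ℤ)))
    -- the Pochhammer symbols in the right-hand series are well defined and nonzero
    (hbase₃ : NotNonposInt (n - 2 * a + 2)) (hbase₄ : NotNonposInt (n - 2 * a + 3/2))
    (hbase₅ : NotNonposInt (n - a + 2))
    (hR : ∀ i : ℕ, NotNonposInt (n - 2 * a + 2 + ((i : ℤ) - 1 : ℤ)) ∧
      NotNonposInt (n - 2 * a + 3/2 + ((i : ℤ) - 1 : ℤ)) ∧
      NotNonposInt (n - a + 2 + ((i : ℤ) - 1 : ℤ)) ∧
      NotNonposInt (n + ((i : ℝ) - 1) - a + 2) ∧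
      NotNonposInt (n + ((i : ℝ) - 1) - a + 2 + (((i : ℤ) - 1) + b + 1 : ℤ)))
    -- `q₂(j) ≠ 0` and `-a + b + 2j + n + 3 ≠ 0` for every integer `j ≥ -1`
    (hq₂ : ∀ i : ℕ, 4 * a - 2 * ((i : ℝ) - 1) - 2 * n - 3 ≠ 0)
    (hs₂ : ∀ i : ℕ, -a + (b : ℝ) + 2 * ((i : ℝ) - 1) + n + 3 ≠ 0) :
    ∃ S : ℝ,
      HasSum (fun i : ℕ =>
        (-1/4 : ℝ) ^ ((i : ℤ) - 1) *
          ((-10 * a ^ 2 + 8 * a * (b : ℝ) + 22 * a * ((i : ℝ) - 1) + 14 * a * n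
              + 28 * a - 2 * (b : ℝ) ^ 2 - 10 * (b : ℝ) * ((i : ℝ) - 1)
              - 6 * (b : ℝ) * n - 12 * (b : ℝ) - 13 * ((i : ℝ) - 1) ^ 2
              - 16 * ((i : ℝ) - 1) * n - 32 * ((i : ℝ) - 1)
              - 5 * n ^ 2 - 20 * n - 20)
            + (-2 * a + ((i : ℝ) - 1) + n + 2) ^ 5 *
                (2 * (b : ℝ) + 3 * ((i : ℝ) - 1) + n + 4) /
                (-a + (b : ℝ) + 2 * ((i : ℝ) - 1) + n + 3) ^ 4) /
          (4 * a - 2 * ((i : ℝ) - 1) - 2 * n - 3) *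
          ((pochZ (n - 2 * a + 2) ((i : ℤ) - 1)) ^ 5 /
            (pochZ (n - 2 * a + 3/2) ((i : ℤ) - 1) *
              (pochZ (n - a + 2) ((i : ℤ) - 1)) ^ 4)) *
          ((pochZ a (((i : ℤ) - 1) + b + 1)) ^ 4 /
            (pochZ (n + ((i : ℝ) - 1) - a + 2) (((i : ℤ) - 1) + b + 1)) ^ 4)) S ∧
      HasSum (fun k : ℕ =>
        (pochZ a ((k : ℤ) + b)) ^ 4 / (pochZ (n - a + 1) ((k : ℤ) + b)) ^ 4 *
          (n + 2 * (k : ℝ) + 2 * (b : ℝ)))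
        ((-2 * a + n + 1) ^ 5 / (4 * (4 * a - 2 * n - 1) * (-a + n + 1) ^ 4) * S) := by
  have h : Good a n b :=
    { lt := ha
      base₁ := hbase₁
      base₂ := hbase₂
      top₁ := by simpa using (hL 0).1
      top₂ := by simpa using (hL 0).2 }
  refine ⟨weightD a n 0 * sumF a n b, ?_, ?_⟩
  · refine (hasSum_iterate h (weightD a n) (weightD_succ ha hbase₂)).congr_fun ?_
    intro i
    have g := h.diag i
    have t1 := g.base₂.ne_zero
    have t2 := g.top₂.ne_zero
    unfold coefA certG termF
    rw [ratioU_succ_left g]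
    unfold ratioU weightD coefC polyQ
    rw [show n + ((i : ℝ) - 1) - a + 2 = n + i - a + 1 by ring,
      show (i : ℤ) - 1 + b + 1 = b + i by ring,
      show 4 * a - 2 * ((i : ℝ) - 1) - 2 * n - 3 = 4 * a - 2 * (n + i) - 1 by ring]
    have hq : 4 * a - 2 * (n + i) - 1 ≠ 0 := by linarith [g.lt]
    have t3 : -a + (b : ℝ) + 2 * ((i : ℝ) - 1) + n + 3 = n + i - a + 1 + ((b + i : ℤ) : ℝ) := by
      push_cast; ring
    rw [t3]
    generalize pochZ a (b + i) ^ 4 / pochZ (n + i - a + 1) (b + i) ^ 4 = U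
    generalize pochZ (n - 2 * a + 2) ((i : ℤ) - 1) ^ 5 /
      (pochZ (n - 2 * a + 3 / 2) ((i : ℤ) - 1) * pochZ (n - a + 2) ((i : ℤ) - 1) ^ 4) = V
    generalize (-1 / 4 : ℝ) ^ ((i : ℤ) - 1) = W
    push_cast at t2 ⊢
    generalize hqd : 4 * a - 2 * (n + i) - 1 = q at *
    field_simp
    ring
  · rw [← mul_assoc, weightD_zero ha hbase₂, one_mul]
    refine (termF_summable h).hasSum.congr_fun fun k => ?_
    unfold termF ratioU
    rw [add_comm (k : ℤ) b]
    push_cast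
    ring
end

section
/- The series Σ_{k=0}^∞ (−1/4)^k · ((5/2)_k)^5 / (((1)_k)^4 · (3)_k) · (4k² + 8k + 5) converges and equals 1024 / (15π²). -/
/-!
The proof rests on a Wilf–Zeilberger pair. Put
`B n k = (-1/4)^n (1/2)_n^5 (1/2)_k^4 / (n! (n+k)!^4)`,
`F n k = B n k (20n² + 8n + 1 + 24kn + 8k² + 4k)` and `G n k = B n k · n (16n + 32k + 8)`. Then
`F n (k+1) - F n k = G (n+1) k - G n k`, and since `G 0 k = 0` and `G n k → 0` as `n → ∞`, the sum
`∑ₙ F n k` does not depend on `k` (`hasSum_F_zero`). As `k → ∞` the terms with `n ≥ 1` contribute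
`O(1/k²)`, because `n! k! / (n+k)! ≤ 1/(k+1)` for them, while `F 0 k → 8/π²` by Wallis' product.
At `k = 0` this is Guillera's formula `∑ₙ (-1/4)^n ((1/2)_n / n!)^5 (20n² + 8n + 1) = 8/π²`
(`guillera`).

The requested series, reindexed by `n = k + 2`, is
`∑ₙ B n 0 · (2^15/3^5) (n(n-1))^4 (4n² - 8n + 5)`, whose terms at `n = 0, 1` vanish. Its summand
differs from `128/15` times Guillera's by a telescoping term `B n 0 · n^5 q(n)` with an explicit
polynomial `q` of degree 5, so its sum is `128/15 · 8/π² = 1024/(15π²)`.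
-/

/-- The Pochhammer symbol `(x)_k = x (x+1) ⋯ (x+k-1) = Γ(x+k)/Γ(x)`. -/
noncomputable def poch (x : ℝ) (k : ℕ) : ℝ := ∏ i ∈ Finset.range k, (x + i)

open Filter Topology Polynomial

lemma poch_succ (x : ℝ) (n : ℕ) : poch x (n + 1) = poch x n * (x + n) := by
  simp [poch, Finset.prod_range_succ]

lemma poch_half_pos (n : ℕ) : 0 < poch (1/2) n := by
  unfold poch
  exact Finset.prod_pos fun i _ => by positivity

lemma poch_half_le (n : ℕ) : poch (1/2) n ≤ n.factorial := by
  induction n with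
  | zero => simp [poch]
  | succ n ih =>
    rw [poch_succ, Nat.factorial_succ]
    push_cast
    rw [mul_comm]
    exact mul_le_mul (by linarith) ih (poch_half_pos n).le (by positivity)

/-- The hypergeometric factor common to both members of the Wilf–Zeilberger pair. -/
noncomputable def wzB (n k : ℕ) : ℝ :=
  (-1/4 : ℝ) ^ n * poch (1/2) n ^ 5 * poch (1/2) k ^ 4 /
    ((n.factorial : ℝ) * ((n + k).factorial : ℝ) ^ 4)

/-- The summand `F` of the Wilf–Zeilberger pair; `wzF n 0` is Guillera's summand. -/
noncomputable def wzF (n k : ℕ) : ℝ :=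
  wzB n k * (20 * (n : ℝ) ^ 2 + 8 * n + 1 + 24 * k * n + 8 * (k : ℝ) ^ 2 + 4 * k)

/-- The companion `G` of `wzF`. -/
noncomputable def wzG (n k : ℕ) : ℝ :=
  wzB n k * (n * (16 * (n : ℝ) + 32 * k + 8))

lemma wzB_succ_left (n k : ℕ) :
    wzB (n + 1) k * ((n + 1) * ((n : ℝ) + k + 1) ^ 4) = wzB n k * (-1/4 * (1/2 + n) ^ 5) := by
  have h1 : ((n.factorial : ℕ) : ℝ) ≠ 0 := by positivity
  have h2 : (((n + k).factorial : ℕ) : ℝ) ≠ 0 := by positivity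
  have h3 : (n : ℝ) + 1 ≠ 0 := by positivity
  have h4 : (n : ℝ) + k + 1 ≠ 0 := by positivity
  unfold wzB
  rw [poch_succ, show n + 1 + k = (n + k) + 1 by ring, Nat.factorial_succ, Nat.factorial_succ]
  push_cast
  field_simp
  ring

lemma wzB_succ_right (n k : ℕ) :
    wzB n (k + 1) * ((n : ℝ) + k + 1) ^ 4 = wzB n k * (1/2 + k) ^ 4 := by
  have h1 : ((n.factorial : ℕ) : ℝ) ≠ 0 := by positivity
  have h2 : (((n + k).factorial : ℕ) : ℝ) ≠ 0 := by positivity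
  have h4 : (n : ℝ) + k + 1 ≠ 0 := by positivity
  unfold wzB
  rw [poch_succ, show n + (k + 1) = (n + k) + 1 by ring, Nat.factorial_succ]
  push_cast
  field_simp

lemma wz_pair (n k : ℕ) : wzF n (k + 1) - wzF n k = wzG (n + 1) k - wzG n k := by
  have h4 : (n : ℝ) + k + 1 ≠ 0 := by positivity
  have hR := wzB_succ_right n k
  have hL := wzB_succ_left n k
  unfold wzF wzG
  push_cast
  apply mul_right_cancel₀ (pow_ne_zero 4 h4)
  linear_combination
    (20 * (n : ℝ) ^ 2 + 8 * n + 1 + 24 * (k + 1) * n + 8 * ((k : ℝ) + 1) ^ 2 + 4 * (k + 1)) * hR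
      - (16 * ((n : ℝ) + 1) + 32 * k + 8) * hL

lemma abs_wzB_le (n k : ℕ) :
    |wzB n k| ≤ (1/4 : ℝ) ^ n *
      ((n.factorial : ℝ) * k.factorial / ((n + k).factorial : ℝ)) ^ 4 := by
  have hn := poch_half_pos n
  have hk := poch_half_pos k
  have h1 : (0 : ℝ) < n.factorial := by positivity
  have h2 : (0 : ℝ) < (n + k).factorial := by positivity
  unfold wzB
  rw [abs_div, abs_mul, abs_mul, abs_pow, abs_of_pos (pow_pos hn 5), abs_of_pos (pow_pos hk 4),
    abs_of_pos (by positivity : (0 : ℝ) < n.factorial * ((n + k).factorial : ℝ) ^ 4),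
    show |(-1/4 : ℝ)| = 1/4 by norm_num [abs_div]]
  calc _ ≤ (1/4 : ℝ) ^ n * (n.factorial : ℝ) ^ 5 * (k.factorial : ℝ) ^ 4 /
        ((n.factorial : ℝ) * ((n + k).factorial : ℝ) ^ 4) := by
        gcongr
        · exact poch_half_le n
        · exact poch_half_le k
    _ = _ := by field_simp

lemma abs_wzB_le_geom (n k : ℕ) : |wzB n k| ≤ (1/4 : ℝ) ^ n := by
  refine (abs_wzB_le n k).trans (mul_le_of_le_one_right (by positivity) ?_)
  refine pow_le_one₀ (by positivity) ?_
  rw [div_le_one (by positivity)]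
  exact_mod_cast Nat.le_of_dvd (Nat.factorial_pos _) (Nat.factorial_mul_factorial_dvd_factorial_add n k)

lemma factorial_mul_factorial_le (m k : ℕ) :
    (m + 1).factorial * (k + 1).factorial ≤ (m + 1 + k).factorial := by
  induction m with
  | zero => simp [add_comm]
  | succ m ih =>
    rw [Nat.factorial_succ (m + 1), show m + 1 + 1 + k = (m + 1 + k) + 1 by ring,
      Nat.factorial_succ (m + 1 + k), mul_assoc]
    exact Nat.mul_le_mul (by omega) ih

/-- Away from `n = 0` the factor decays in `k` fast enough to beat the quadratic in `wzF`. -/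
lemma abs_wzB_succ_le (m k : ℕ) :
    |wzB (m + 1) k| ≤ (1/4 : ℝ) ^ (m + 1) * (1 / ((k : ℝ) + 1)) ^ 4 := by
  refine (abs_wzB_le (m + 1) k).trans ?_
  refine mul_le_mul_of_nonneg_left (pow_le_pow_left₀ (by positivity) ?_ 4) (by positivity)
  rw [div_le_div_iff₀ (by positivity) (by positivity), one_mul]
  have h := factorial_mul_factorial_le m k
  rw [Nat.factorial_succ k] at h
  have h' : ((m + 1).factorial : ℝ) * ((k + 1) * k.factorial) ≤ (m + 1 + k).factorial := by
    exact_mod_cast h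
  linarith

lemma summable_wzB_mul_eval (P : ℝ[X]) (k : ℕ) :
    Summable fun n : ℕ => wzB n k * P.eval (n : ℝ) := by
  simp only [Polynomial.eval_eq_sum_range, Finset.mul_sum]
  refine summable_sum fun j _ => ?_
  have h := (summable_pow_mul_geometric_of_norm_lt_one j
    (show ‖(1/4 : ℝ)‖ < 1 by norm_num)).mul_left |P.coeff j|
  refine Summable.of_norm_bounded h fun n => ?_
  rw [Real.norm_eq_abs, abs_mul, abs_mul, abs_pow, Nat.abs_cast]
  have := abs_wzB_le_geom n k
  calc _ ≤ (1/4 : ℝ) ^ n * (|P.coeff j| * (n : ℝ) ^ j) := by gcongr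
    _ = _ := by ring

lemma summable_wzF (k : ℕ) : Summable fun n => wzF n k := by
  refine (summable_wzB_mul_eval (C 20 * X ^ 2 + C 8 * X + C 1 + C (24 * (k : ℝ)) * X +
    C (8 * (k : ℝ) ^ 2) + C (4 * (k : ℝ))) k).congr fun n => ?_
  simp only [eval_add, eval_mul, eval_pow, eval_X, eval_C, wzF]

lemma tendsto_wzG (k : ℕ) : Tendsto (fun n => wzG n k) atTop (𝓝 0) := by
  refine ((summable_wzB_mul_eval (X * (C 16 * X + C (32 * (k : ℝ)) + C 8)) k).congr
    fun n => ?_).tendsto_atTop_zero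
  simp only [eval_add, eval_mul, eval_X, eval_C, wzG]

lemma hasSum_telescope {f g : ℕ → ℝ} (hf : Summable f) (h : ∀ n, f n = g (n + 1) - g n)
    (h0 : g 0 = 0) (hg : Tendsto g atTop (𝓝 0)) : HasSum f 0 := by
  have h1 := hf.hasSum.tendsto_sum_nat
  have h2 : (fun n => ∑ i ∈ Finset.range n, f i) = g := by
    ext n
    simp only [h, Finset.sum_range_sub, h0, sub_zero]
  rw [h2] at h1
  rw [← tendsto_nhds_unique h1 hg]
  exact hf.hasSum

/-- The sum over `n` of the Wilf–Zeilberger summand is independent of `k`. -/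
lemma hasSum_F_zero (k : ℕ) : HasSum (fun n => wzF n k) (∑' n, wzF n 0) := by
  induction k with
  | zero => exact (summable_wzF 0).hasSum
  | succ k ih =>
    have h := hasSum_telescope ((summable_wzF (k + 1)).sub (summable_wzF k))
      (fun n => wz_pair n k) (by simp [wzG]) (tendsto_wzG k)
    simpa using h.add ih

lemma tendsto_tail :
    Tendsto (fun k : ℕ => ∑' n, wzF (n + 1) k) atTop (𝓝 0) := by
  have hs : Summable fun n : ℕ => ((n + 1 : ℕ) : ℝ) ^ 2 * (1/4 : ℝ) ^ (n + 1) :=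
    (summable_nat_add_iff (f := fun n : ℕ => (n : ℝ) ^ 2 * (1/4 : ℝ) ^ n) 1).2
      (summable_pow_mul_geometric_of_norm_lt_one 2 (show ‖(1/4 : ℝ)‖ < 1 by norm_num))
  have hb : ∀ k n : ℕ, ‖wzF (n + 1) k‖ ≤
      (100 * (1 / ((k : ℝ) + 1)) ^ 2) * (((n + 1 : ℕ) : ℝ) ^ 2 * (1/4 : ℝ) ^ (n + 1)) := by
    intro k n
    have hB := abs_wzB_succ_le n k
    have hq : (0 : ℝ) ≤ 20 * ((n + 1 : ℕ) : ℝ) ^ 2 + 8 * ((n + 1 : ℕ) : ℝ) + 1 +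
        24 * k * ((n + 1 : ℕ) : ℝ) + 8 * (k : ℝ) ^ 2 + 4 * k := by positivity
    rw [wzF, Real.norm_eq_abs, abs_mul, abs_of_nonneg hq]
    have hk : (0 : ℝ) ≤ k := by positivity
    have hn : (0 : ℝ) ≤ n := by positivity
    push_cast
    calc _ ≤ ((1/4 : ℝ) ^ (n + 1) * (1 / ((k : ℝ) + 1)) ^ 4) *
          (100 * ((n : ℝ) + 1) ^ 2 * ((k : ℝ) + 1) ^ 2) := by
          gcongr
          have := mul_nonneg hk hn
          have := mul_nonneg hk (mul_nonneg hn hn)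
          have := mul_nonneg hn (mul_nonneg hk hk)
          have := mul_nonneg (mul_nonneg hn hn) (mul_nonneg hk hk)
          nlinarith
      _ = _ := by field_simp
  have h0 : Tendsto (fun k : ℕ => (100 * (1 / ((k : ℝ) + 1)) ^ 2) *
      ∑' n : ℕ, (((n + 1 : ℕ) : ℝ) ^ 2 * (1/4 : ℝ) ^ (n + 1))) atTop (𝓝 0) := by
    have := ((tendsto_one_div_add_atTop_nhds_zero_nat (𝕜 := ℝ)).pow 2).const_mul 100
    simpa using this.mul_const (∑' n : ℕ, (((n + 1 : ℕ) : ℝ) ^ 2 * (1/4 : ℝ) ^ (n + 1)))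
  exact squeeze_zero_norm (fun k => tsum_of_norm_bounded (hs.hasSum.mul_left _) (hb k)) h0

/-- The central factor `(1/2)_k / k!` expressed through the Wallis product. -/
lemma poch_half_sq_mul_W (k : ℕ) :
    poch (1/2) k ^ 2 * (2 * k + 1) * Real.Wallis.W k = (k.factorial : ℝ) ^ 2 := by
  induction k with
  | zero => simp [poch, Real.Wallis.W]
  | succ k ih =>
    rw [Real.Wallis.W_succ, poch_succ, Nat.factorial_succ]
    push_cast
    rw [mul_pow ((k : ℝ) + 1), ← ih]
    field_simp
    ring

lemma tendsto_wzF_zero : Tendsto (fun k => wzF 0 k) atTop (𝓝 (8 / Real.pi ^ 2)) := by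
  have hW := Real.Wallis.tendsto_W_nhds_pi_div_two
  have hlin : Tendsto (fun k : ℕ => (k : ℝ) * 2 + 1) atTop atTop :=
    tendsto_atTop_add_const_right _ _ (tendsto_natCast_atTop_atTop.atTop_mul_const two_pos)
  have hrat : Tendsto (fun k : ℕ => 2 - 2 * ((k : ℝ) * 2 + 1)⁻¹ + ((k : ℝ) * 2 + 1)⁻¹ ^ 2)
      atTop (𝓝 2) := by
    have h := hlin.inv_tendsto_atTop
    simpa using ((h.const_mul 2).const_sub 2).add (h.pow 2)
  have h := ((hW.pow 2).inv₀ (by positivity)).mul hrat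
  have e : ((Real.pi / 2) ^ 2)⁻¹ * 2 = 8 / Real.pi ^ 2 := by field_simp; norm_num
  rw [e] at h
  refine h.congr fun k => ?_
  have hw := Real.Wallis.W_pos k
  have hf : (0 : ℝ) < k.factorial := by positivity
  have hk := poch_half_sq_mul_W k
  have hp := poch_half_pos k
  have hB : wzB 0 k = ((Real.Wallis.W k) ^ 2)⁻¹ * (((k : ℝ) * 2 + 1) ^ 2)⁻¹ := by
    have h4 : (k.factorial : ℝ) ^ 4 = (poch (1/2) k ^ 2 * (2 * k + 1) * Real.Wallis.W k) ^ 2 := by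
      rw [hk]; ring
    simp only [wzB, zero_add, h4]
    simp only [poch, Finset.range_zero, Finset.prod_empty, pow_zero, Nat.factorial_zero]
    change _ * (poch (1/2) k) ^ 4 / (_ * (poch (1/2) k ^ 2 * _ * _) ^ 2) = _
    field_simp
    ring
  rw [wzF, hB]
  push_cast
  field_simp
  ring

lemma guillera : HasSum (fun n => wzF n 0) (8 / Real.pi ^ 2) := by
  have h1 : ∀ k : ℕ, wzF 0 k + ∑' n, wzF (n + 1) k = ∑' n, wzF n 0 := fun k => by
    rw [← (hasSum_F_zero k).tsum_eq, (summable_wzF k).tsum_eq_zero_add]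
  have h2 := tendsto_wzF_zero.add tendsto_tail
  simp only [h1, add_zero] at h2
  rw [← tendsto_nhds_unique tendsto_const_nhds h2]
  exact (summable_wzF 0).hasSum

/-- The polynomial `q` for which `wzB n 0 * n ^ 5 * q n` has forward difference
`wzB n 0 * redP n`. -/
noncomputable def redQ : ℝ[X] :=
  C (1163264/243) + C (-3506176/405) * X + C (2621440/243) * X ^ 2 + C (-2097152/243) * X ^ 3 +
    C (262144/81) * X ^ 4 + C (-524288/1215) * X ^ 5

/-- The polynomial factor of the requested summand relative to `wzB n 0`, at `n = k + 2`, minus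
`128/15` times that of Guillera's summand. -/
noncomputable def redP : ℝ[X] :=
  C (32768/243) * (X * (X - C 1)) ^ 4 * (C 4 * X ^ 2 - C 8 * X + C 5) -
    C (128/15) * (C 20 * X ^ 2 + C 8 * X + C 1)

lemma hasSum_reduction : HasSum (fun n : ℕ => wzB n 0 * redP.eval (n : ℝ)) 0 := by
  refine hasSum_telescope (g := fun n : ℕ => wzB n 0 * (X ^ 5 * redQ).eval (n : ℝ))
    (summable_wzB_mul_eval _ 0) (fun n => ?_) (by simp)
    (summable_wzB_mul_eval _ 0).tendsto_atTop_zero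
  have hL := wzB_succ_left n 0
  simp only [redP, redQ, eval_add, eval_sub, eval_mul, eval_pow, eval_X, eval_C]
  push_cast at hL ⊢
  linear_combination
    (-(1163264/243 + -3506176/405 * ((n : ℝ) + 1) + 2621440/243 * ((n : ℝ) + 1) ^ 2 +
      -2097152/243 * ((n : ℝ) + 1) ^ 3 + 262144/81 * ((n : ℝ) + 1) ^ 4 +
      -524288/1215 * ((n : ℝ) + 1) ^ 5)) * hL

lemma poch_half_add_two (k : ℕ) : poch (1/2) (k + 2) = 3/4 * poch (5/2) k := by
  induction k with
  | zero => norm_num [poch, Finset.prod_range_succ]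
  | succ k ih =>
    rw [show k + 1 + 2 = (k + 2) + 1 by ring, poch_succ, ih, poch_succ]
    push_cast
    ring

lemma poch_one (k : ℕ) : poch 1 k = k.factorial := by
  induction k with
  | zero => simp [poch]
  | succ k ih => rw [poch_succ, ih, Nat.factorial_succ]; push_cast; ring

lemma poch_three (k : ℕ) : poch 3 k = (k.factorial : ℝ) * (k + 1) * (k + 2) / 2 := by
  induction k with
  | zero => simp [poch]
  | succ k ih => rw [poch_succ, ih, Nat.factorial_succ]; push_cast; ring

theorem series_52 :
    HasSum
      (fun k : ℕ =>
        (-1/4 : ℝ) ^ k * (poch (5/2) k) ^ 5 / ((poch 1 k) ^ 4 * poch 3 k) *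
          (4 * (k : ℝ) ^ 2 + 8 * k + 5))
      (1024 / (15 * Real.pi ^ 2)) := by
  have h := hasSum_reduction.add (guillera.mul_left (128/15))
  have e : (0 : ℝ) + 128/15 * (8 / Real.pi ^ 2) = 1024 / (15 * Real.pi ^ 2) := by
    field_simp; norm_num
  rw [e] at h
  -- Dropping `n = 0, 1` is free because of the factor `(n (n - 1)) ^ 4`.
  have h' := (hasSum_nat_add_iff' 2).2 h
  simp only [Finset.sum_range_succ, Finset.sum_range_zero] at h'
  have h0 : (0 : ℝ) + (wzB 0 0 * redP.eval ((0 : ℕ) : ℝ) + 128/15 * wzF 0 0) +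
      (wzB 1 0 * redP.eval ((1 : ℕ) : ℝ) + 128/15 * wzF 1 0) = 0 := by
    simp only [redP, wzF, eval_add, eval_sub, eval_mul, eval_pow, eval_X, eval_C]
    push_cast
    ring
  rw [h0, sub_zero] at h'
  have hterm : ∀ k : ℕ,
      wzB (k + 2) 0 * redP.eval ((k + 2 : ℕ) : ℝ) + 128/15 * wzF (k + 2) 0 =
        (-1/4 : ℝ) ^ k * (poch (5/2) k) ^ 5 / ((poch 1 k) ^ 4 * poch 3 k) *
          (4 * (k : ℝ) ^ 2 + 8 * k + 5) := by
    intro k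
    have hf : (0 : ℝ) < k.factorial := by positivity
    have hB : wzB (k + 2) 0 = (-1/4 : ℝ) ^ (k + 2) * (3/4 * poch (5/2) k) ^ 5 /
        (((k : ℝ) + 2) * ((k + 1) * k.factorial)) ^ 5 := by
      simp only [wzB, poch_half_add_two, add_zero, Nat.factorial_succ]
      simp only [poch, Finset.range_zero, Finset.prod_empty]
      push_cast
      rw [show (k : ℝ) + 1 + 1 = k + 2 by ring]
      ring
    rw [wzF, hB, poch_one, poch_three]
    simp only [redP, eval_add, eval_sub, eval_mul, eval_pow, eval_X, eval_C]
    push_cast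
    field_simp
    ring
  simpa only [hterm] using h'
end
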